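/- Let p be a prime. Suppose L ⊆ Z^{p-1} is a translate set for a tiling of Z^{p-1} by the semi-cross V = {0, e_1, ..., e_{p-1}}, and suppose 0 ∉ L. Then the number of elements of L of type [1^k] (exactly k coordinates equal to 1, the rest 0) equals (C(p-1, k) - (-1)^k)/p, for each 1 ≤ k < p. -/

import Mathlib

/-- A tiling of `ℤ^n` by translates of `V` with translate set `L`:
every point has a unique representation `v + l` with `v ∈ V`, `l ∈ L`. -/
def IsTiling {n : ℕ} (V L : Set (Fin n → ℤ)) : Prop :=
  ∀ x : Fin n → ℤ, ∃! p : (Fin n → ℤ) × (Fin n → ℤ),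
    p.1 ∈ V ∧ p.2 ∈ L ∧ p.1 + p.2 = x

/-- The semi-cross `{0, e_1, …, e_m}` in `ℤ^m`. -/
def semicross (m : ℕ) : Set (Fin m → ℤ) :=
  insert 0 (Set.range fun i : Fin m => Pi.single i 1)

/-- The set of elements of `L` of type `[1^k]`: exactly `k` coordinates equal `1`,
all others equal `0`. -/
def typeOneK {m : ℕ} (L : Set (Fin m → ℤ)) (k : ℕ) : Set (Fin m → ℤ) :=
  {x ∈ L | ∃ s : Finset (Fin m), s.card = k ∧ ∀ i, x i = if i ∈ s then 1 else 0}

/-- The linear functional on polynomials sending the monomial `X ^ m` to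
`f (x + ∑ i, m i • v i)`. -/
noncomputable def shiftEval {G σ : Type*} [AddCommGroup G] (v : σ → G) (f : G → ℤ) (x : G) :
    MvPolynomial σ ℤ →ₗ[ℤ] ℤ :=
  (MvPolynomial.basisMonomials σ ℤ).constr ℤ fun m => f (x + m.sum fun i a => a • v i)

section shiftEval

open MvPolynomial Finset

variable {G σ : Type*} [AddCommGroup G] (v : σ → G) (f : G → ℤ)

lemma shiftEval_monomial (x : G) (m : σ →₀ ℕ) (c : ℤ) :
    shiftEval v f x (monomial m c) = c * f (x + m.sum fun i a => a • v i) := by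
  have h : monomial m c = c • basisMonomials σ ℤ m := by
    rw [coe_basisMonomials, smul_monomial, smul_eq_mul, mul_one]
  rw [h, map_smul, shiftEval, Module.Basis.constr_basis, smul_eq_mul]

lemma shiftEval_mul_monomial (x : G) (P : MvPolynomial σ ℤ) (m : σ →₀ ℕ) (c : ℤ) :
    shiftEval v f x (P * monomial m c) =
      c * shiftEval v f (x + m.sum fun i a => a • v i) P := by
  induction P using MvPolynomial.induction_on' with
  | monomial u a =>
    rw [monomial_mul, shiftEval_monomial, shiftEval_monomial,
      Finsupp.sum_add_index' (by simp) (by intros; rw [add_smul])]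
    rw [add_comm (u.sum _), add_assoc]
    ring
  | add P Q hP hQ => rw [add_mul, map_add, map_add, hP, hQ, mul_add]

/-- A polynomial acting on `f` as a constant acts on products as that constant times
the evaluation at `1`. -/
lemma shiftEval_mul_of_const {P : MvPolynomial σ ℤ} {c : ℤ}
    (h : ∀ x, shiftEval v f x P = c) (x : G) (Q : MvPolynomial σ ℤ) :
    shiftEval v f x (P * Q) = c * eval 1 Q := by
  induction Q using MvPolynomial.induction_on' with
  | monomial u a => rw [shiftEval_mul_monomial, h, eval_monomial]; simp [mul_comm]
  | add Q R hQ hR => rw [mul_add, map_add, map_add, hQ, hR, mul_add]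

variable [Fintype σ]

lemma shiftEval_psum (x : G) (j : ℕ) :
    shiftEval v f x (psum σ ℤ j) = ∑ i, f (x + j • v i) := by
  simp only [psum, map_sum, X_pow_eq_monomial, shiftEval_monomial, one_mul]
  simp

lemma shiftEval_esymm (x : G) (k : ℕ) :
    shiftEval v f x (esymm σ ℤ k) = ∑ s ∈ powersetCard k univ, f (x + ∑ i ∈ s, v i) := by
  classical
  rw [esymm_eq_sum_monomial, map_sum]
  refine sum_congr rfl fun s _ => ?_
  rw [shiftEval_monomial, one_mul, ← Finsupp.sum_finsetSum_index (by simp)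
    (by intros; rw [add_smul])]
  simp

lemma C_dvd_psum_one_pow_sub_psum (q : ℕ) [Fact q.Prime] :
    C (q : ℤ) ∣ psum σ ℤ 1 ^ q - psum σ ℤ q := by
  rw [C_dvd_iff_zmod]
  simp [psum, sum_pow_char]

variable {v f}

/-- If `f` tiles with `v`, then multiplying `v` by a prime `q` preserves the tiling modulo `q`. -/
lemma dvd_sum_prime_smul_sub (hf : ∀ x, ∑ i, f (x + v i) = 1) (q : ℕ) (hq : q.Prime) (x : G) :
    (q : ℤ) ∣ ∑ i, f (x + q • v i) - (Fintype.card σ : ℤ) ^ (q - 1) := by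
  have : Fact q.Prime := ⟨hq⟩
  obtain ⟨R, hR⟩ := C_dvd_psum_one_pow_sub_psum (σ := σ) q
  have h1 : shiftEval v f x (psum σ ℤ 1 ^ q) = (Fintype.card σ : ℤ) ^ (q - 1) := by
    rw [← mul_pow_sub_one hq.ne_zero, shiftEval_mul_of_const (c := 1)]
    · simp [psum]
    · intro y; rw [shiftEval_psum]; simpa using hf y
  have h2 := congrArg (shiftEval v f x) hR
  rw [map_sub, h1, shiftEval_psum, C_mul', map_smul, smul_eq_mul] at h2
  exact ⟨-shiftEval v f x R, by linarith⟩

lemma apply_add_card_smul (hf : ∀ x, ∑ i, f (x + v i) = 1) (h01 : ∀ x, f x = 0 ∨ f x = 1)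
    (hp : (Fintype.card σ).Prime) {i₀ : σ} (hi₀ : v i₀ = 0) (x : G) (i : σ) :
    f (x + Fintype.card σ • v i) = f x := by
  set p := Fintype.card σ with hpdef
  have h := dvd_sum_prime_smul_sub hf p hp x
  rw [dvd_sub_left (dvd_pow_self _ (Nat.sub_ne_zero_of_lt hp.one_lt))] at h
  have hx : f x = f (x + p • v i₀) := by simp [hi₀]
  set g : σ → ℤ := fun i => f (x + p • v i) with hg
  change (p : ℤ) ∣ ∑ i, g i at h
  change g i = _
  rw [hx]
  change g i = g i₀
  have g0 : ∀ i, 0 ≤ g i := fun i => by rcases h01 (x + p • v i) with h | h <;> simp [hg, h]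
  have g1 : ∀ i, g i ≤ 1 := fun i => by rcases h01 (x + p • v i) with h | h <;> simp [hg, h]
  rcases (sum_nonneg fun i _ => g0 i : 0 ≤ ∑ i, g i).eq_or_lt with h0 | h0
  · have := (sum_eq_zero_iff_of_nonneg fun i _ => g0 i).1 h0.symm
    rw [this i (mem_univ _), this i₀ (mem_univ _)]
  · have h1 := Int.le_of_dvd h0 h
    have h2 : ∑ i, (1 - g i) = 0 := by
      apply le_antisymm _ (sum_nonneg fun i _ => sub_nonneg.2 (g1 i))
      rw [sum_sub_distrib]
      simpa [← hpdef] using h1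
    have := (sum_eq_zero_iff_of_nonneg fun i _ => sub_nonneg.2 (g1 i)).1 h2
    linarith [this i (mem_univ _), this i₀ (mem_univ _)]

lemma apply_add_card_zsmul (hf : ∀ x, ∑ i, f (x + v i) = 1) (h01 : ∀ x, f x = 0 ∨ f x = 1)
    (hp : (Fintype.card σ).Prime) {i₀ : σ} (hi₀ : v i₀ = 0) (x : G) (i : σ) (t : ℤ) :
    f (x + t • Fintype.card σ • v i) = f x := by
  induction t using Int.induction_on with
  | zero => simp
  | succ n ih =>
    rw [add_smul, one_smul, ← add_assoc, apply_add_card_smul hf h01 hp hi₀, ih]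
  | pred n ih =>
    rw [← ih, ← apply_add_card_smul hf h01 hp hi₀ _ i, sub_smul, one_smul, add_assoc,
      sub_add_cancel]

/-- A tiling by a prime number of cells stays a tiling when the cells are multiplied by an
integer coprime to that prime. -/
lemma sum_apply_add_zsmul (hf : ∀ x, ∑ i, f (x + v i) = 1) (h01 : ∀ x, f x = 0 ∨ f x = 1)
    (hp : (Fintype.card σ).Prime) {i₀ : σ} (hi₀ : v i₀ = 0) (j : ℤ)
    (hj : ¬ (Fintype.card σ : ℤ) ∣ j) (x : G) :
    ∑ i, f (x + j • v i) = 1 := by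
  have hper := apply_add_card_zsmul hf h01 hp hi₀
  have hprime := dvd_sum_prime_smul_sub hf
  have hle : ∀ q : ℕ, ∑ i, f (x + q • v i) ≤ Fintype.card σ := fun q => by
    refine (sum_le_card_nsmul univ _ 1 fun i _ => ?_).trans (by simp)
    rcases h01 (x + q • v i) with h | h <;> simp [h]
  have hnonneg : ∀ q : ℕ, 0 ≤ ∑ i, f (x + q • v i) := fun q => sum_nonneg fun i _ => by
    rcases h01 (x + q • v i) with h | h <;> simp [h]
  generalize Fintype.card σ = p at *
  have : Fact p.Prime := ⟨hp⟩
  have hj' : (j : ZMod p) ≠ 0 := by rwa [Ne, ZMod.intCast_zmod_eq_zero_iff_dvd]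
  obtain ⟨q, hqp, hq, hqj⟩ := Nat.forall_exists_prime_gt_and_eq_mod (isUnit_iff_ne_zero.2 hj') p
  obtain ⟨t, ht⟩ : (p : ℤ) ∣ j - q := by
    rw [← ZMod.intCast_zmod_eq_zero_iff_dvd]; simp [hqj]
  have hsum : ∑ i, f (x + j • v i) = ∑ i, f (x + q • v i) := by
    refine sum_congr rfl fun i _ => ?_
    rw [← hper (x + q • v i) i t, eq_add_of_sub_eq' ht, add_smul, mul_comm, mul_smul, natCast_zsmul,
      natCast_zsmul, add_assoc]
  have hfermat : (q : ℤ) ∣ (p : ℤ) ^ (q - 1) - 1 := by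
    have : Fact q.Prime := ⟨hq⟩
    rw [← ZMod.intCast_zmod_eq_zero_iff_dvd]
    have hne : (p : ZMod q) ≠ 0 := by
      rw [Ne, ZMod.natCast_eq_zero_iff]
      exact Nat.not_dvd_of_pos_of_lt hp.pos hqp
    simp [ZMod.pow_card_sub_one_eq_one hne]
  have hdvd := dvd_add (hprime q hq x) hfermat
  rw [sub_add_sub_cancel] at hdvd
  rw [hsum]
  have h2 := hp.two_le
  have := hle q
  have := hnonneg q
  exact sub_eq_zero.1 (Int.eq_zero_of_abs_lt_dvd hdvd (by rw [abs_lt]; constructor <;> omega))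

lemma card_mul_sum_powersetCard (hf : ∀ j : ℕ, 0 < j → j < Fintype.card σ →
      ∀ x, ∑ i, f (x + j • v i) = 1)
    {k : ℕ} (hk0 : 0 < k) (hk : k < Fintype.card σ) (x : G) :
    (Fintype.card σ : ℤ) * ∑ s ∈ powersetCard k univ, f (x + ∑ i ∈ s, v i) =
      (Fintype.card σ).choose k := by
  classical
  have hk' : (k : ℤ) ≠ 0 := by exact_mod_cast hk0.ne'
  rw [← shiftEval_esymm]
  have hchoose : ((Fintype.card σ).choose k : ℤ) = eval 1 (esymm σ ℤ k) := by
    simp [esymm]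
  rw [hchoose]
  apply mul_left_cancel₀ hk'
  have key : (Fintype.card σ : ℤ) * shiftEval v f x ((k : MvPolynomial σ ℤ) * esymm σ ℤ k) =
      eval 1 ((k : MvPolynomial σ ℤ) * esymm σ ℤ k) := by
    rw [mul_esymm_eq_sum, mul_sum, map_sum, map_sum, mul_sum]
    refine sum_congr rfl fun a ha => ?_
    simp only [mem_filter, HasAntidiagonal.mem_antidiagonal] at ha
    rw [← mul_assoc, mul_comm _ (psum _ _ _), shiftEval_mul_of_const (c := 1), one_mul, map_mul]
    · simp [psum]
    · intro y
      rw [shiftEval_psum, hf _ (by omega) (by omega)]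
  have hC : (k : MvPolynomial σ ℤ) * esymm σ ℤ k = (k : ℤ) • esymm σ ℤ k := by simp
  rw [hC, map_smul, smul_eq_mul, smul_eval] at key
  linarith

end shiftEval

open Finset

/-- The cells of the semi-cross, indexed by `Option (Fin m)`. -/
def semicrossCell (m : ℕ) (o : Option (Fin m)) : Fin m → ℤ :=
  o.elim 0 fun i => Pi.single i 1

lemma range_semicrossCell (m : ℕ) : Set.range (semicrossCell m) = semicross m := by
  ext x
  simp [semicrossCell, semicross, Option.exists, eq_comm]

lemma semicrossCell_injective (m : ℕ) : Function.Injective (semicrossCell m) := by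
  rintro (_ | i) (_ | j) h
  · rfl
  · simpa [semicrossCell] using congrFun h j
  · simpa [semicrossCell] using congrFun h i
  · by_contra hne
    have hij : i ≠ j := fun h => hne (by rw [h])
    simpa [semicrossCell, hij] using congrFun h i

lemma IsTiling.sum_indicator {m : ℕ} {L : Set (Fin m → ℤ)} (hT : IsTiling (semicross m) L)
    (x : Fin m → ℤ) :
    ∑ o, L.indicator (1 : (Fin m → ℤ) → ℤ) (x + -semicrossCell m o) = 1 := by
  obtain ⟨⟨v, l⟩, ⟨hv, hl, rfl⟩, huniq⟩ := hT x
  rw [← range_semicrossCell] at hv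
  obtain ⟨o, rfl⟩ := hv
  rw [sum_eq_single o]
  · simp [hl]
  · intro o' _ hne
    refine Set.indicator_of_notMem (fun hmem => hne ?_) _
    have := huniq (semicrossCell m o', _) ⟨range_semicrossCell m ▸ ⟨o', rfl⟩, hmem, by simp⟩
    exact semicrossCell_injective m (congrArg Prod.fst this)
  · simp

lemma sum_powersetCard_univ_option {α M : Type*} [Fintype α] [DecidableEq α] [AddCommMonoid M]
    (k : ℕ) (F : Finset (Option α) → M) :
    ∑ s ∈ powersetCard (k + 1) univ, F s =
      ∑ s ∈ powersetCard (k + 1) univ, F (s.map .some) +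
        ∑ s ∈ powersetCard k univ, F (insert none (s.map .some)) := by
  have huniv : (univ : Finset (Option α)) = insert none (univ.map .some) := by
    ext (_ | a) <;> simp
  have hnone (s : Finset α) : none ∉ s.map Function.Embedding.some := by simp
  rw [huniv, powersetCard_succ_insert (hnone _), sum_union, sum_image, powersetCard_map,
    powersetCard_map, sum_map, sum_map]
  · rfl
  · intro s hs t ht h
    simp only [mem_coe, mem_powersetCard] at hs ht
    rw [← erase_insert fun hm => hnone _ (hs.1 hm), h, erase_insert fun hm => hnone _ (ht.1 hm)]
  · rw [disjoint_left]
    intro s hs ht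
    obtain ⟨t, -, rfl⟩ := mem_image.1 ht
    exact hnone _ ((mem_powersetCard.1 hs).1 (mem_insert_self _ _))

lemma ncard_typeOneK {m : ℕ} (L : Set (Fin m → ℤ)) (k : ℕ) :
    ((typeOneK L k).ncard : ℤ) =
      ∑ s ∈ powersetCard k univ, L.indicator 1 (∑ i ∈ s, Pi.single i (1 : ℤ)) := by
  classical
  have hw (s : Finset (Fin m)) (i : Fin m) :
      (∑ j ∈ s, Pi.single j (1 : ℤ) : Fin m → ℤ) i = if i ∈ s then 1 else 0 := by
    simp [Finset.sum_apply, Pi.single_apply]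
  have hset : typeOneK L k = (fun s : Finset (Fin m) => ∑ j ∈ s, Pi.single j (1 : ℤ)) ''
      ↑{s ∈ powersetCard k (univ : Finset (Fin m)) | (∑ j ∈ s, Pi.single j (1 : ℤ) : Fin m → ℤ) ∈ L} := by
    ext x
    simp only [typeOneK, Set.mem_ofPred_eq, Set.mem_image, coe_filter, mem_powersetCard,
      subset_univ, true_and]
    constructor
    · rintro ⟨hx, s, hs, h⟩
      obtain rfl : ∑ j ∈ s, Pi.single j (1 : ℤ) = x := funext fun i => by rw [hw, h]
      exact ⟨s, ⟨hs, hx⟩, rfl⟩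
    · rintro ⟨s, ⟨hs, hx⟩, rfl⟩
      exact ⟨hx, s, hs, hw s⟩
  have hinj : Function.Injective
      (fun s : Finset (Fin m) => (∑ j ∈ s, Pi.single j (1 : ℤ) : Fin m → ℤ)) := by
    intro s t h
    ext i
    have := congrFun h i
    simp only [hw] at this
    by_cases h1 : i ∈ s <;> by_cases h2 : i ∈ t <;> simp_all
  rw [hset, Set.ncard_image_of_injective _ hinj, Set.ncard_coe_finset, card_filter]
  push_cast
  exact sum_congr rfl fun s _ => by simp [Set.indicator_apply]

lemma IsTiling.card_mul_ncard_typeOneK_add {m : ℕ} (hp : (m + 1).Prime) {L : Set (Fin m → ℤ)}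
    (hT : IsTiling (semicross m) L) {k : ℕ} (hk : k < m) :
    ((m + 1 : ℕ) : ℤ) * ((typeOneK L (k + 1)).ncard + (typeOneK L k).ncard) =
      (m + 1).choose (k + 1) := by
  have hcard : Fintype.card (Option (Fin m)) = m + 1 := by simp
  have h := card_mul_sum_powersetCard (v := semicrossCell m) (f := L.indicator 1) (k := k + 1)
    (fun j hj0 hj x => by
      have := sum_apply_add_zsmul (v := fun o => -semicrossCell m o) (f := L.indicator 1)
        hT.sum_indicator (fun x => by by_cases hx : x ∈ L <;> simp [hx]) (by rwa [hcard])
        (i₀ := none) (by simp [semicrossCell]) (-j)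
        (by rw [dvd_neg, Int.natCast_dvd_natCast]; exact Nat.not_dvd_of_pos_of_lt hj0 hj) x
      simpa using this)
    (by omega) (by omega) 0
  rw [hcard, sum_powersetCard_univ_option] at h
  rw [← h, ncard_typeOneK, ncard_typeOneK]
  simp [semicrossCell]

theorem stmt_14 (p : ℕ) (hp : p.Prime) (L : Set (Fin (p - 1) → ℤ))
    (hT : IsTiling (semicross (p - 1)) L) (h0 : (0 : Fin (p - 1) → ℤ) ∉ L)
    (k : ℕ) (hk1 : 1 ≤ k) (hk : k < p) :
    (p : ℤ) * ((typeOneK L k).ncard : ℤ) =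
      (Nat.choose (p - 1) k : ℤ) - (-1) ^ k := by
  obtain ⟨m, rfl⟩ : ∃ m, p = m + 1 := ⟨p - 1, (Nat.sub_add_cancel hp.one_le).symm⟩
  simp only [Nat.add_sub_cancel] at *
  clear hk1
  induction k with
  | zero => simp [ncard_typeOneK, h0]
  | succ k ih =>
    have h := hT.card_mul_ncard_typeOneK_add hp (k := k) (by omega)
    rw [Nat.choose_succ_succ] at h
    have := ih (by omega)
    push_cast at *
    rw [pow_succ]
    linarith
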